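/- arXiv:1206.4284 — 2 statements merged into one kernel-verified Lean document; each statement's English description precedes it below -/
import Mathlib

section
/- Let C₀ and C₁ be categories, with C₁ a groupoid, let C₂ be a category, and let s₁, t₁ : C₁ ⥤ C₀ and s₂, t₂ : C₂ ⥤ C₁ be functors satisfying s₁ ∘ t₂ = s₁ ∘ s₂ and t₁ ∘ t₂ = t₁ ∘ s₂. Let P = C₁ ×_{C₀×C₀} C₁ be the strict pullback category whose objects are pairs (X, Y) of objects of C₁ with s₁(X) = s₁(Y) and t₁(X) = t₁(Y) and whose morphisms are pairs (u, v) of morphisms of C₁ with s₁(u) = s₁(v) and t₁(u) = t₁(v); P is a groupoid. Suppose the induced functor s₂ × t₂ : C₂ ⥤ P is a fibration. Then for all objects a, b of C₀: (1) C₁(a,b) is a groupoid; and (2) the induced functor C₂(a,b) ⥤ C₁(a,b) × C₁(a,b), sending x to (s₂(x), t₂(x)) and φ to (s₂(φ), t₂(φ)), is a fibration. (This is the fibrancy claim in the proof of Proposition 3.1.) -/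
open CategoryTheory

universe v₀ v₁ v₂ u₀ u₁ u₂

def IsFibration {A : Type u₀} {B : Type u₁} [Category.{v₀} A] [Category.{v₁} B]
    (F : A ⥤ B) : Prop :=
  ∀ ⦃b b' : B⦄ (f : b ⟶ b') (a' : A) (h : F.obj a' = b'),
    ∃ (a : A) (ha : F.obj a = b) (e : a ≅ a'),
      F.map e.hom = eqToHom ha ≫ f ≫ eqToHom h.symm

variable {C₀ : Type u₀} {C₁ : Type u₁} {C₂ : Type u₂}
  [Category.{v₀} C₀] [Category.{v₁} C₁] [Category.{v₂} C₂]

/-- Objects of the strict pullback `C₁ ×_{C₀×C₀} C₁`. -/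
structure PB (s₁ t₁ : C₁ ⥤ C₀) where
  X : C₁
  Y : C₁
  hs : s₁.obj X = s₁.obj Y
  ht : t₁.obj X = t₁.obj Y

/-- Morphisms of the strict pullback `C₁ ×_{C₀×C₀} C₁`. -/
@[ext]
structure PBHom {s₁ t₁ : C₁ ⥤ C₀} (A B : PB s₁ t₁) where
  u : A.X ⟶ B.X
  v : A.Y ⟶ B.Y
  hs : s₁.map u ≫ eqToHom B.hs = eqToHom A.hs ≫ s₁.map v
  ht : t₁.map u ≫ eqToHom B.ht = eqToHom A.ht ≫ t₁.map v

instance (s₁ t₁ : C₁ ⥤ C₀) : Category (PB s₁ t₁) where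
  Hom := PBHom
  id A := ⟨𝟙 A.X, 𝟙 A.Y, by simp, by simp⟩
  comp f g := ⟨f.u ≫ g.u, f.v ≫ g.v,
    by rw [Functor.map_comp, Functor.map_comp, Category.assoc, g.hs, ← Category.assoc, f.hs,
      Category.assoc],
    by rw [Functor.map_comp, Functor.map_comp, Category.assoc, g.ht, ← Category.assoc, f.ht,
      Category.assoc]⟩
  id_comp f := by apply PBHom.ext <;> simp
  comp_id f := by apply PBHom.ext <;> simp
  assoc f g h := by apply PBHom.ext <;> simp

@[simp] theorem PB.id_u {s₁ t₁ : C₁ ⥤ C₀} (A : PB s₁ t₁) :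
    PBHom.u (𝟙 A) = 𝟙 A.X := rfl
@[simp] theorem PB.id_v {s₁ t₁ : C₁ ⥤ C₀} (A : PB s₁ t₁) :
    PBHom.v (𝟙 A) = 𝟙 A.Y := rfl
@[simp] theorem PB.comp_u {s₁ t₁ : C₁ ⥤ C₀} {A B C : PB s₁ t₁} (f : A ⟶ B) (g : B ⟶ C) :
    PBHom.u (f ≫ g) = PBHom.u f ≫ PBHom.u g := rfl
@[simp] theorem PB.comp_v {s₁ t₁ : C₁ ⥤ C₀} {A B C : PB s₁ t₁} (f : A ⟶ B) (g : B ⟶ C) :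
    PBHom.v (f ≫ g) = PBHom.v f ≫ PBHom.v g := rfl

/-- The functor `s₂ × t₂ : C₂ ⥤ C₁ ×_{C₀×C₀} C₁`. -/
def sourceTarget (s₁ t₁ : C₁ ⥤ C₀) (s₂ t₂ : C₂ ⥤ C₁)
    (hst : t₂ ⋙ s₁ = s₂ ⋙ s₁) (htt : t₂ ⋙ t₁ = s₂ ⋙ t₁) :
    C₂ ⥤ PB s₁ t₁ where
  obj x := ⟨s₂.obj x, t₂.obj x, (Functor.congr_obj hst x).symm, (Functor.congr_obj htt x).symm⟩
  map {x y} φ := by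
    refine ⟨s₂.map φ, t₂.map φ, ?_, ?_⟩
    · have h := Functor.congr_hom hst φ
      simp only [Functor.comp_map] at h
      rw [h]
      simp
    · have h := Functor.congr_hom htt φ
      simp only [Functor.comp_map] at h
      rw [h]
      simp
  map_id x := by apply PBHom.ext <;> simp
  map_comp f g := by apply PBHom.ext <;> simp

/-- Objects of the category `C₁(a,b)`: objects `X` of `C₁` with `s₁(X) = a` and `t₁(X) = b`. -/
structure Hom1 (s₁ t₁ : C₁ ⥤ C₀) (a b : C₀) where
  X : C₁
  hs : s₁.obj X = a
  ht : t₁.obj X = b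

/-- Morphisms of `C₁(a,b)`: morphisms `u` of `C₁` with `s₁(u) = 𝟙_a` and `t₁(u) = 𝟙_b`. -/
@[ext]
structure Hom1Hom {s₁ t₁ : C₁ ⥤ C₀} {a b : C₀} (A B : Hom1 s₁ t₁ a b) where
  u : A.X ⟶ B.X
  hs : s₁.map u = eqToHom (A.hs.trans B.hs.symm)
  ht : t₁.map u = eqToHom (A.ht.trans B.ht.symm)

instance (s₁ t₁ : C₁ ⥤ C₀) (a b : C₀) : Category (Hom1 s₁ t₁ a b) where
  Hom := Hom1Hom
  id A := ⟨𝟙 A.X, by simp, by simp⟩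
  comp f g := ⟨f.u ≫ g.u, by rw [Functor.map_comp, f.hs, g.hs, eqToHom_trans],
    by rw [Functor.map_comp, f.ht, g.ht, eqToHom_trans]⟩
  id_comp f := by apply Hom1Hom.ext; simp
  comp_id f := by apply Hom1Hom.ext; simp
  assoc f g h := by apply Hom1Hom.ext; simp

@[simp] theorem Hom1.id_u {s₁ t₁ : C₁ ⥤ C₀} {a b : C₀} (A : Hom1 s₁ t₁ a b) :
    Hom1Hom.u (𝟙 A) = 𝟙 A.X := rfl
@[simp] theorem Hom1.comp_u {s₁ t₁ : C₁ ⥤ C₀} {a b : C₀} {A B C : Hom1 s₁ t₁ a b}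
    (f : A ⟶ B) (g : B ⟶ C) : Hom1Hom.u (f ≫ g) = Hom1Hom.u f ≫ Hom1Hom.u g := rfl

/-- Objects of the category `C₂(a,b)`: objects `x` of `C₂` with `s₁(s₂(x)) = a` and
`t₁(t₂(x)) = b`. -/
structure Hom2 (s₁ t₁ : C₁ ⥤ C₀) (s₂ t₂ : C₂ ⥤ C₁) (a b : C₀) where
  x : C₂
  hs : s₁.obj (s₂.obj x) = a
  ht : t₁.obj (t₂.obj x) = b

/-- Morphisms of `C₂(a,b)`: morphisms `φ` of `C₂` with `s₁(s₂(φ)) = 𝟙_a` and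
`t₁(t₂(φ)) = 𝟙_b`. -/
@[ext]
structure Hom2Hom {s₁ t₁ : C₁ ⥤ C₀} {s₂ t₂ : C₂ ⥤ C₁} {a b : C₀}
    (A B : Hom2 s₁ t₁ s₂ t₂ a b) where
  φ : A.x ⟶ B.x
  hs : s₁.map (s₂.map φ) = eqToHom (A.hs.trans B.hs.symm)
  ht : t₁.map (t₂.map φ) = eqToHom (A.ht.trans B.ht.symm)

instance (s₁ t₁ : C₁ ⥤ C₀) (s₂ t₂ : C₂ ⥤ C₁) (a b : C₀) :
    Category (Hom2 s₁ t₁ s₂ t₂ a b) where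
  Hom := Hom2Hom
  id A := ⟨𝟙 A.x, by simp, by simp⟩
  comp f g := ⟨f.φ ≫ g.φ,
    by rw [Functor.map_comp, Functor.map_comp, f.hs, g.hs, eqToHom_trans],
    by rw [Functor.map_comp, Functor.map_comp, f.ht, g.ht, eqToHom_trans]⟩
  id_comp f := by apply Hom2Hom.ext; simp
  comp_id f := by apply Hom2Hom.ext; simp
  assoc f g h := by apply Hom2Hom.ext; simp

@[simp] theorem Hom2.id_φ {s₁ t₁ : C₁ ⥤ C₀} {s₂ t₂ : C₂ ⥤ C₁} {a b : C₀}
    (A : Hom2 s₁ t₁ s₂ t₂ a b) : Hom2Hom.φ (𝟙 A) = 𝟙 A.x := rfl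
@[simp] theorem Hom2.comp_φ {s₁ t₁ : C₁ ⥤ C₀} {s₂ t₂ : C₂ ⥤ C₁} {a b : C₀}
    {A B C : Hom2 s₁ t₁ s₂ t₂ a b} (f : A ⟶ B) (g : B ⟶ C) :
    Hom2Hom.φ (f ≫ g) = Hom2Hom.φ f ≫ Hom2Hom.φ g := rfl

/-- The induced functor `C₂(a,b) ⥤ C₁(a,b) × C₁(a,b)`, sending `x` to `(s₂(x), t₂(x))`
and `φ` to `(s₂(φ), t₂(φ))`. -/
def homFunctor (s₁ t₁ : C₁ ⥤ C₀) (s₂ t₂ : C₂ ⥤ C₁)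
    (hst : t₂ ⋙ s₁ = s₂ ⋙ s₁) (htt : t₂ ⋙ t₁ = s₂ ⋙ t₁) (a b : C₀) :
    Hom2 s₁ t₁ s₂ t₂ a b ⥤ Hom1 s₁ t₁ a b × Hom1 s₁ t₁ a b where
  obj A := ⟨⟨s₂.obj A.x, A.hs, (Functor.congr_obj htt A.x).symm.trans A.ht⟩,
            ⟨t₂.obj A.x, (Functor.congr_obj hst A.x).trans A.hs, A.ht⟩⟩
  map {A B} f := by
    refine ⟨⟨s₂.map f.φ, f.hs, ?_⟩, ⟨t₂.map f.φ, ?_, f.ht⟩⟩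
    · have h := Functor.congr_hom htt.symm f.φ
      simp only [Functor.comp_map] at h
      rw [h, f.ht]
      simp
    · have h := Functor.congr_hom hst f.φ
      simp only [Functor.comp_map] at h
      rw [h, f.hs]
      simp
  map_id A := by
    refine Prod.ext ?_ ?_ <;> apply Hom1Hom.ext <;> simp
  map_comp f g := by
    refine Prod.ext ?_ ?_ <;> apply Hom1Hom.ext <;> simp

/-- If `C₁` is a groupoid and the induced functor
`s₂ × t₂ : C₂ ⥤ C₁ ×_{C₀×C₀} C₁` is a fibration, then for all objects `a`, `b` of `C₀`:
(1) `C₁(a,b)` is a groupoid, and (2) the induced functor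
`C₂(a,b) ⥤ C₁(a,b) × C₁(a,b)` is a fibration. -/
theorem hom_groupoid_and_hom_fibration {C₀ : Type u₀} {C₁ : Type u₁} {C₂ : Type u₂}
    [Category.{v₀} C₀] [Groupoid.{v₁} C₁] [Category.{v₂} C₂]
    (s₁ t₁ : C₁ ⥤ C₀) (s₂ t₂ : C₂ ⥤ C₁)
    (hst : t₂ ⋙ s₁ = s₂ ⋙ s₁) (htt : t₂ ⋙ t₁ = s₂ ⋙ t₁)
    (hfib : IsFibration (sourceTarget s₁ t₁ s₂ t₂ hst htt))
    (a b : C₀) :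
    (∀ (X Y : Hom1 s₁ t₁ a b) (f : X ⟶ Y), IsIso f) ∧
      IsFibration (homFunctor s₁ t₁ s₂ t₂ hst htt a b) := by
  constructor
  · intro X Y f
    refine ⟨⟨⟨Groupoid.inv f.u, ?_, ?_⟩, ?_, ?_⟩⟩
    · rw [Groupoid.inv_eq_inv, Functor.map_inv, IsIso.inv_eq_of_hom_inv_id]
      rw [f.hs]; simp
    · rw [Groupoid.inv_eq_inv, Functor.map_inv, IsIso.inv_eq_of_hom_inv_id]
      rw [f.ht]; simp
    · apply Hom1Hom.ext; exact Groupoid.comp_inv f.u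
    · apply Hom1Hom.ext; exact Groupoid.inv_comp f.u
  · rintro ⟨⟨X, hXs, hXt⟩, ⟨Y, hYs, hYt⟩⟩ B f A h
    subst h
    obtain ⟨⟨u, hus, hut⟩, ⟨v, hvs, hvt⟩⟩ := f
    obtain ⟨x, hx, e, he⟩ := hfib
      (b := ⟨X, Y, hXs.trans hYs.symm, hXt.trans hYt.symm⟩)
      (b' := (sourceTarget s₁ t₁ s₂ t₂ hst htt).obj A.x)
      ⟨u, v, by
        change s₁.map u ≫ _ = _ ≫ s₁.map v
        rw [hus, hvs]; exact (eqToHom_trans _ _).trans (eqToHom_trans _ _).symm, by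
        change t₁.map u ≫ _ = _ ≫ t₁.map v
        rw [hut, hvt]; exact (eqToHom_trans _ _).trans (eqToHom_trans _ _).symm⟩ A.x rfl
    have h1 : s₂.obj x = X := congrArg PB.X hx
    have h2 : t₂.obj x = Y := congrArg PB.Y hx
    subst h1 h2
    replace he := he.trans ((Category.id_comp _).trans (Category.comp_id _))
    have h3 : s₂.map e.hom = u := congrArg PBHom.u he
    have h4 : t₂.map e.hom = v := congrArg PBHom.v he
    subst h3 h4
    refine ⟨⟨x, hXs, hYt⟩, rfl, ⟨⟨e.hom, hus, hvt⟩, ⟨e.inv, ?_, ?_⟩, ?_, ?_⟩, ?_⟩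
    · have k : s₁.map (s₂.map e.hom) ≫ s₁.map (s₂.map e.inv) = 𝟙 _ := by
        simp [← Functor.map_comp]
      have hus' : s₁.map (s₂.map e.hom) = eqToHom (hXs.trans A.hs.symm) := hus
      rw [hus', eqToHom_comp_iff] at k
      simpa using k
    · have k : t₁.map (t₂.map e.hom) ≫ t₁.map (t₂.map e.inv) = 𝟙 _ := by
        simp [← Functor.map_comp]
      have hvt' : t₁.map (t₂.map e.hom) = eqToHom (hYt.trans A.ht.symm) := hvt
      rw [hvt', eqToHom_comp_iff] at k
      simpa using k
    · apply Hom2Hom.ext; exact e.hom_inv_id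
    · apply Hom2Hom.ext; exact e.inv_hom_id
    · refine Eq.symm ((Category.id_comp _).trans ((Category.comp_id _).trans ?_))
      rfl
end

section
/- Let C₀ be a groupoid, C₁ a category, and s, t : C₁ ⥤ C₀ functors such that s × t : C₁ ⥤ C₀ × C₀ is a fibration. Let C₁ ×_{C₀} C₁ denote the strict pullback category (objects: pairs (M, N) of objects of C₁ with t(M) = s(N); morphisms: pairs (u, v) with t(u) = s(v)), and let m : C₁ ×_{C₀} C₁ ⥤ C₁ be a functor with s ∘ m = s ∘ pr₁ and t ∘ m = t ∘ pr₂. Let C₁ ×ʰ_{C₀} C₁ denote the homotopy pullback category, whose objects are triples (M, N, φ) with M, N objects of C₁ and φ : t(M) ≅ s(N) an isomorphism in C₀, and whose morphisms (M, N, φ) ⟶ (M', N', φ') are pairs (u : M ⟶ M', v : N ⟶ N') with φ' ∘ t(u) = s(v) ∘ φ. Then there exists a functor m̃ : C₁ ×ʰ_{C₀} C₁ ⥤ C₁ satisfying s ∘ m̃ = s ∘ pr₁ and t ∘ m̃ = t ∘ pr₂, together with a natural isomorphism m̃ ∘ ι ≅ m, where ι : C₁ ×_{C₀} C₁ ⥤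 C₁ ×ʰ_{C₀} C₁ is the inclusion (M, N) ↦ (M, N, 𝟙). (This is the claim of Section 2.1 that the fibration condition allows one to extend horizontal composition from the strict pullback to the homotopy pullback.) -/
open CategoryTheory

universe v₀ v₁ u₀ u₁

variable {C₀ : Type u₀} {C₁ : Type u₁} [Category.{v₀} C₀] [Category.{v₁} C₁]

/-- The strict pullback `C₁ ×_{C₀} C₁`: objects are pairs `(M, N)` of objects of `C₁`
with `t(M) = s(N)`. -/
structure StrictPB (s t : C₁ ⥤ C₀) where
  M : C₁
  N : C₁
  w : t.obj M = s.obj N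

/-- Morphisms of the strict pullback: pairs `(u, v)` with `t(u) = s(v)`. -/
@[ext]
structure StrictPBHom {s t : C₁ ⥤ C₀} (A B : StrictPB s t) where
  u : A.M ⟶ B.M
  v : A.N ⟶ B.N
  w : t.map u ≫ eqToHom B.w = eqToHom A.w ≫ s.map v

instance (s t : C₁ ⥤ C₀) : Category (StrictPB s t) where
  Hom := StrictPBHom
  id A := ⟨𝟙 A.M, 𝟙 A.N, by simp⟩
  comp f g := ⟨f.u ≫ g.u, f.v ≫ g.v, by
    rw [Functor.map_comp, Functor.map_comp, Category.assoc, g.w, ← Category.assoc, f.w,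
      Category.assoc]⟩
  id_comp f := by apply StrictPBHom.ext <;> simp
  comp_id f := by apply StrictPBHom.ext <;> simp
  assoc f g h := by apply StrictPBHom.ext <;> simp

/-- First projection of the strict pullback. -/
def pbFst (s t : C₁ ⥤ C₀) : StrictPB s t ⥤ C₁ where
  obj A := A.M
  map f := f.u

/-- Second projection of the strict pullback. -/
def pbSnd (s t : C₁ ⥤ C₀) : StrictPB s t ⥤ C₁ where
  obj A := A.N
  map f := f.v

/-- The homotopy pullback `C₁ ×ʰ_{C₀} C₁`: objects are triples `(M, N, φ)` with
`φ : t(M) ≅ s(N)` an isomorphism in `C₀`. -/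
structure HtpyPB (s t : C₁ ⥤ C₀) where
  M : C₁
  N : C₁
  φ : t.obj M ≅ s.obj N

/-- Morphisms of the homotopy pullback: pairs `(u, v)` with `φ' ∘ t(u) = s(v) ∘ φ`. -/
@[ext]
structure HtpyPBHom {s t : C₁ ⥤ C₀} (A B : HtpyPB s t) where
  u : A.M ⟶ B.M
  v : A.N ⟶ B.N
  w : t.map u ≫ B.φ.hom = A.φ.hom ≫ s.map v

instance (s t : C₁ ⥤ C₀) : Category (HtpyPB s t) where
  Hom := HtpyPBHom
  id A := ⟨𝟙 A.M, 𝟙 A.N, by simp⟩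
  comp f g := ⟨f.u ≫ g.u, f.v ≫ g.v, by
    rw [Functor.map_comp, Functor.map_comp, Category.assoc, g.w, ← Category.assoc, f.w,
      Category.assoc]⟩
  id_comp f := by apply HtpyPBHom.ext <;> simp
  comp_id f := by apply HtpyPBHom.ext <;> simp
  assoc f g h := by apply HtpyPBHom.ext <;> simp

/-- First projection of the homotopy pullback. -/
def hpFst (s t : C₁ ⥤ C₀) : HtpyPB s t ⥤ C₁ where
  obj A := A.M
  map f := f.u

/-- Second projection of the homotopy pullback. -/
def hpSnd (s t : C₁ ⥤ C₀) : HtpyPB s t ⥤ C₁ where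
  obj A := A.N
  map f := f.v

/-- The inclusion `(M, N) ↦ (M, N, 𝟙)` of the strict pullback in the homotopy pullback. -/
def inclPB (s t : C₁ ⥤ C₀) : StrictPB s t ⥤ HtpyPB s t where
  obj A := ⟨A.M, A.N, eqToIso A.w⟩
  map f := ⟨f.u, f.v, by simpa using f.w⟩
  map_id A := by apply HtpyPBHom.ext <;> rfl
  map_comp f g := by apply HtpyPBHom.ext <;> rfl

theorem eq3_aux {C : Type u₀} [Category.{v₀} C] {W X Y Z : C} (p : W = X) (q : X = Y)
    (r : Y = Z) (w : W = Z) : eqToHom p ≫ eqToHom q ≫ eqToHom r = eqToHom w := by simp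

theorem conj_aux {C : Type u₀} [Category.{v₀} C] {X' X Y' Y : C} (i : X' ≅ X) (j : Y' ≅ Y)
    (g : X ⟶ Y) : (i.hom ≫ g ≫ j.inv) ≫ j.hom = i.hom ≫ g := by simp

theorem lift_aux {C₀ : Type u₀} {C₁ : Type u₁}
    [Groupoid.{v₀} C₀] [Category.{v₁} C₁] (s t : C₁ ⥤ C₀)
    (hfib : IsFibration (s.prod' t)) (A : HtpyPB s t) :
    ∃ (a : C₁) (hs : s.obj a = s.obj A.M) (ht : t.obj a = s.obj A.N) (e : a ≅ A.M),
      s.map e.hom = eqToHom hs ∧ t.map e.hom = eqToHom ht ≫ A.φ.inv := by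
  obtain ⟨a, ha, e, he⟩ := hfib (b := (s.obj A.M, s.obj A.N)) (b' := (s.obj A.M, t.obj A.M))
    (Prod.mkHom (𝟙 _) A.φ.inv) A.M rfl
  have h1 := congrArg Prod.fst ha
  have h2 := congrArg Prod.snd ha
  refine ⟨a, h1, h2, e, ?_, ?_⟩
  · have := congrArg (fun f => (CategoryTheory.Prod.fst C₀ C₀).map f) he
    simp only [Functor.map_comp, eqToHom_map] at this
    simpa using this
  · have := congrArg (fun f => (CategoryTheory.Prod.snd C₀ C₀).map f) he
    simp only [Functor.map_comp, eqToHom_map] at this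
    simpa using this

/-- If `C₀` is a groupoid and `s × t : C₁ ⥤ C₀ × C₀` is a fibration, then any horizontal
composition functor `m` on the strict pullback, compatible with source and target, extends
to a functor `m̃` on the homotopy pullback, compatible with source and target, and
restricting to `m` on the strict pullback up to natural isomorphism. -/
theorem exists_homotopy_composition {C₀ : Type u₀} {C₁ : Type u₁}
    [Groupoid.{v₀} C₀] [Category.{v₁} C₁] (s t : C₁ ⥤ C₀)
    (hfib : IsFibration (s.prod' t))
    (m : StrictPB s t ⥤ C₁)
    (hsm : m ⋙ s = pbFst s t ⋙ s) (htm : m ⋙ t = pbSnd s t ⋙ t) :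
    ∃ m' : HtpyPB s t ⥤ C₁,
      m' ⋙ s = hpFst s t ⋙ s ∧ m' ⋙ t = hpSnd s t ⋙ t ∧
        Nonempty (inclPB s t ⋙ m' ≅ m) := by
  choose a hs ht e hes het using lift_aux s t hfib
  have hesi : ∀ A, s.map (e A).inv = eqToHom (hs A).symm := fun A => by
    rw [← cancel_epi (s.map (e A).hom), ← s.map_comp, hes]; simp
  have heti : ∀ A, t.map (e A).inv = A.φ.hom ≫ eqToHom (ht A).symm := fun A => by
    rw [← cancel_epi (t.map (e A).hom), ← t.map_comp, het]; simp
  let R : HtpyPB s t ⥤ StrictPB s t :=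
    { obj := fun A => ⟨a A, A.N, ht A⟩
      map := fun {A B} f => ⟨(e A).hom ≫ f.u ≫ (e B).inv, f.v, by
        have := f.w
        simp only [Functor.map_comp, het, heti, Category.assoc, eqToHom_trans, eqToHom_refl,
          Category.comp_id]
        rw [this]; simp⟩
      map_id := fun A => by
        apply StrictPBHom.ext
        · change (e A).hom ≫ 𝟙 A.M ≫ (e A).inv = 𝟙 (a A)
          simp
        · rfl
      map_comp := fun {A B C} f g => by
        apply StrictPBHom.ext
        · change (e A).hom ≫ (f.u ≫ g.u) ≫ (e C).inv =
            ((e A).hom ≫ f.u ≫ (e B).inv) ≫ (e B).hom ≫ g.u ≫ (e C).inv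
          simp
        · rfl }
  have hR : Nonempty (inclPB s t ⋙ R ≅ 𝟭 _) := by
    refine ⟨NatIso.ofComponents (fun A =>
      { hom := ⟨(e ((inclPB s t).obj A)).hom, 𝟙 A.N, ?_⟩
        inv := ⟨(e ((inclPB s t).obj A)).inv, 𝟙 A.N, ?_⟩
        hom_inv_id := ?_
        inv_hom_id := ?_ }) ?_⟩
    · change t.map (e ((inclPB s t).obj A)).hom ≫ eqToHom A.w = eqToHom (ht _) ≫ s.map (𝟙 A.N)
      rw [het]; simp [inclPB]
    · change t.map (e ((inclPB s t).obj A)).inv ≫ eqToHom (ht _) = eqToHom A.w ≫ s.map (𝟙 A.N)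
      rw [heti]; simp [inclPB]; exact eq3_aux _ _ _ _
    · apply StrictPBHom.ext
      · exact (e ((inclPB s t).obj A)).hom_inv_id
      · exact Category.comp_id (𝟙 A.N)
    · apply StrictPBHom.ext
      · exact (e ((inclPB s t).obj A)).inv_hom_id
      · exact Category.comp_id (𝟙 A.N)
    · intro A B f
      apply StrictPBHom.ext
      · change ((e ((inclPB s t).obj A)).hom ≫ f.u ≫ (e ((inclPB s t).obj B)).inv) ≫
          (e ((inclPB s t).obj B)).hom = (e ((inclPB s t).obj A)).hom ≫ f.u
        exact conj_aux _ _ _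
      · change f.v ≫ 𝟙 B.N = 𝟙 A.N ≫ f.v
        simp
  refine ⟨R ⋙ m, ?_, ?_, ?_⟩
  · rw [Functor.assoc, hsm]
    refine CategoryTheory.Functor.ext (fun A => hs A) (fun A B f => ?_)
    change s.map ((e A).hom ≫ f.u ≫ (e B).inv) = eqToHom _ ≫ s.map f.u ≫ eqToHom _
    simp only [Functor.map_comp, hes, hesi]
  · rw [Functor.assoc, htm]
    rfl
  · obtain ⟨i⟩ := hR
    exact ⟨(Functor.associator _ _ _).symm ≪≫ Functor.isoWhiskerRight i m ≪≫ m.leftUnitor⟩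
end
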